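/- The relation on pairs of twin binary trees defined by J_0 ≤_B J_1 iff there exist permutations σ_0, σ_1 with P(σ_0) = J_0, P(σ_1) = J_1 and σ_0 ≤_P σ_1 is a partial order on the set of pairs of twin binary trees with n nodes, and this poset is a lattice. -/

import Mathlib

open scoped Classical

/-- Baxter adjacency relations on words over the alphabet of natural numbers. -/
def BaxterAdj (w w' : List ℕ) : Prop :=
  (∃ (a b c d : ℕ) (u v : List ℕ), a ≤ b ∧ b < c ∧ c ≤ d ∧
      w = c :: (u ++ a :: d :: (v ++ [b])) ∧ w' = c :: (u ++ d :: a :: (v ++ [b]))) ∨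
  (∃ (a b c d : ℕ) (u v : List ℕ), a < b ∧ b ≤ c ∧ c < d ∧
      w = b :: (u ++ d :: a :: (v ++ [c])) ∧ w' = b :: (u ++ a :: d :: (v ++ [c])))

/-- One rewriting step: an adjacency applied inside a word (congruence context). -/
def BaxterStep (w w' : List ℕ) : Prop :=
  ∃ (p s u v : List ℕ), BaxterAdj u v ∧ w = p ++ u ++ s ∧ w' = p ++ v ++ s

/-- The Baxter congruence: the equivalence generated by the Baxter steps. -/
def BaxterEquiv : List ℕ → List ℕ → Prop := Relation.EqvGen BaxterStep

/-- Sylvester adjacency: a c u b ≡ c a u b when a ≤ b < c. -/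
def SylvAdj (w w' : List ℕ) : Prop :=
  ∃ (a b c : ℕ) (u : List ℕ), a ≤ b ∧ b < c ∧
    w = a :: c :: (u ++ [b]) ∧ w' = c :: a :: (u ++ [b])

def SylvStep (w w' : List ℕ) : Prop :=
  ∃ (p s u v : List ℕ), SylvAdj u v ∧ w = p ++ u ++ s ∧ w' = p ++ v ++ s

def SylvEquiv : List ℕ → List ℕ → Prop := Relation.EqvGen SylvStep

/-- #-sylvester adjacency: b u a c ≡ b u c a when a < b ≤ c. -/
def SylvHAdj (w w' : List ℕ) : Prop :=
  ∃ (a b c : ℕ) (u : List ℕ), a < b ∧ b ≤ c ∧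
    w = b :: (u ++ [a, c]) ∧ w' = b :: (u ++ [c, a])

def SylvHStep (w w' : List ℕ) : Prop :=
  ∃ (p s u v : List ℕ), SylvHAdj u v ∧ w = p ++ u ++ s ∧ w' = p ++ v ++ s

def SylvHEquiv : List ℕ → List ℕ → Prop := Relation.EqvGen SylvHStep

/-- The standardized word of `u`: position `i` receives the rank of the letter `u i`
(ties broken from left to right), ranks starting at `1`. -/
def std (u : List ℕ) : List ℕ :=
  (List.range u.length).map fun i =>
    ((List.range u.length).filter fun j =>
      decide (u.getD j 0 < u.getD i 0 ∨ (u.getD j 0 = u.getD i 0 ∧ j < i))).length + 1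

/-- The maximal letter of a word. -/
def wordMax (u : List ℕ) : ℕ := u.foldr max 0

/-- The Schützenberger transformation: reverse and complement each letter w.r.t. max + 1. -/
def schutz (u : List ℕ) : List ℕ := u.reverse.map fun x => wordMax u + 1 - x

/-- Labeled binary trees. -/
inductive BT where
  | leaf : BT
  | node : BT → ℕ → BT → BT
deriving DecidableEq

/-- Leaf insertion into a left binary search tree. -/
def leafInsL : BT → ℕ → BT
  | .leaf, a => .node .leaf a .leaf
  | .node l b r, a => if a < b then .node (leafInsL l a) b r else .node l b (leafInsL r a)

/-- Leaf insertion into a right binary search tree. -/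
def leafInsR : BT → ℕ → BT
  | .leaf, a => .node .leaf a .leaf
  | .node l b r, a => if a ≤ b then .node (leafInsR l a) b r else .node l b (leafInsR r a)

/-- The lower restricted tree `T_{≤ a}` of a right binary search tree. -/
def splitLE : BT → ℕ → BT
  | .leaf, _ => .leaf
  | .node l b r, a => if b ≤ a then .node l b (splitLE r a) else splitLE l a

/-- The higher restricted tree `T_{> a}` of a right binary search tree. -/
def splitGT : BT → ℕ → BT
  | .leaf, _ => .leaf
  | .node l b r, a => if b ≤ a then splitGT r a else .node (splitGT l a) b r

/-- Root insertion into a right binary search tree. -/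
def rootIns (t : BT) (a : ℕ) : BT := .node (splitLE t a) a (splitGT t a)

/-- The left tree of the P-symbol: leaf insertions from left to right. -/
def insL (u : List ℕ) : BT := u.foldl leafInsL .leaf

/-- The right tree of the P-symbol: root insertions from left to right. -/
def insR (u : List ℕ) : BT := u.foldl rootIns .leaf

/-- The P-symbol of a word. -/
def Psymb (u : List ℕ) : BT × BT := (insL u, insR u)

/-- Unlabeled binary trees. -/
inductive UBT where
  | leaf : UBT
  | node : UBT → UBT → UBT
deriving DecidableEq

/-- The shape of a labeled binary tree. -/
def shape : BT → UBT
  | .leaf => .leaf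
  | .node l _ r => .node (shape l) (shape r)

/-- The shape of the P-symbol of a word. -/
def Pshape (u : List ℕ) : UBT × UBT := (shape (insL u), shape (insR u))

/-- Number of internal nodes. -/
def sizeU : UBT → ℕ
  | .leaf => 0
  | .node l r => sizeU l + sizeU r + 1

/-- Orientations of the leaves, from left to right: `true` means right-oriented
(the leaf is the right child of its parent); the parameter is the orientation
assigned if the tree is reduced to a leaf. -/
def loU : UBT → Bool → List Bool
  | .leaf, b => [b]
  | .node l r, _ => loU l false ++ loU r true

/-- Leaf orientations of a labeled binary tree. -/
def loB : BT → Bool → List Bool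
  | .leaf, b => [b]
  | .node l _ r, _ => loB l false ++ loB r true

/-- The canopy: orientations of the leaves except the first and the last one. -/
def canU (t : UBT) : List Bool := ((loU t false).drop 1).dropLast

/-- A pair of twin binary trees: same number of nodes and complementary canopies. -/
def IsTwin (J : UBT × UBT) : Prop :=
  sizeU J.1 = sizeU J.2 ∧ (canU J.1).length = (canU J.2).length ∧
    ∀ i < (canU J.1).length, (canU J.1).getD i false ≠ (canU J.2).getD i false

/-- `σ` is (the word of) a permutation of `{1, …, n}`. -/
def IsPerm (n : ℕ) (σ : List ℕ) : Prop := σ.Perm (List.range' 1 n)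

/-- Covering-type step of the right permutohedron (weak) order: exchange of two
adjacent letters `a < b`. -/
def PermutoStep (σ ν : List ℕ) : Prop :=
  ∃ (p s : List ℕ) (a b : ℕ), a < b ∧ σ = p ++ a :: b :: s ∧ ν = p ++ b :: a :: s

/-- The right permutohedron (weak) order. -/
def PermutoLe : List ℕ → List ℕ → Prop := Relation.ReflTransGen PermutoStep

/-- Baxter permutations: avoiding the generalized patterns 2-41-3 and 3-14-2. -/
def IsBaxterPerm (σ : List ℕ) : Prop :=
  ∀ i j k, i < j → j + 1 < k → k < σ.length →
    ¬(σ.getD (j+1) 0 < σ.getD i 0 ∧ σ.getD i 0 < σ.getD k 0 ∧ σ.getD k 0 < σ.getD j 0) ∧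
    ¬(σ.getD j 0 < σ.getD k 0 ∧ σ.getD k 0 < σ.getD i 0 ∧ σ.getD i 0 < σ.getD (j+1) 0)

/-- The Baxter order on pairs of twin binary trees, induced by the
permutohedron order via the insertion algorithm. -/
def leB (J0 J1 : UBT × UBT) : Prop :=
  ∃ (n : ℕ) (σ0 σ1 : List ℕ), IsPerm n σ0 ∧ IsPerm n σ1 ∧
    Pshape σ0 = J0 ∧ Pshape σ1 = J1 ∧ PermutoLe σ0 σ1

/-! ### The left and right descendant relations of a tree (nodes labeled in infix order) -/

/-- `a` lies in the left subtree of `b`, labels starting at `s`. -/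
def LR : UBT → ℕ → ℕ → ℕ → Prop
  | .leaf, _, _, _ => False
  | .node l r, s, a, b => LR l s a b ∨ (b = s + sizeU l ∧ s ≤ a ∧ a < b) ∨
      LR r (s + sizeU l + 1) a b

/-- `b` lies in the right subtree of `a`, labels starting at `s`. -/
def RR : UBT → ℕ → ℕ → ℕ → Prop
  | .leaf, _, _, _ => False
  | .node l r, s, a, b => RR l s a b ∨
      (a = s + sizeU l ∧ a < b ∧ b < s + sizeU l + 1 + sizeU r) ∨
      RR r (s + sizeU l + 1) a b

theorem LR_bd (t : UBT) : ∀ s a b, LR t s a b → s ≤ a ∧ a < b ∧ b < s + sizeU t := by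
  induction t with
  | leaf => intro s a b h; exact h.elim
  | node l r ihl ihr =>
    intro s a b h
    simp only [sizeU]
    rcases h with h | h | h
    · have := ihl _ _ _ h; omega
    · omega
    · have := ihr _ _ _ h; omega

theorem RR_bd (t : UBT) : ∀ s a b, RR t s a b → s ≤ a ∧ a < b ∧ b < s + sizeU t := by
  induction t with
  | leaf => intro s a b h; exact h.elim
  | node l r ihl ihr =>
    intro s a b h
    simp only [sizeU]
    rcases h with h | h | h
    · have := ihl _ _ _ h; omega
    · omega
    · have := ihr _ _ _ h; omega

theorem LR_int (t : UBT) : ∀ s a b c, LR t s a b → a ≤ c → c < b → LR t s c b := by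
  induction t with
  | leaf => intro s a b c h; exact h.elim
  | node l r ihl ihr =>
    intro s a b c h h1 h2
    rcases h with h | h | h
    · exact Or.inl (ihl _ _ _ _ h h1 h2)
    · exact Or.inr (Or.inl (by omega))
    · exact Or.inr (Or.inr (ihr _ _ _ _ h h1 h2))

theorem RR_int (t : UBT) : ∀ s a b c, RR t s a b → a < c → c ≤ b → RR t s a c := by
  induction t with
  | leaf => intro s a b c h; exact h.elim
  | node l r ihl ihr =>
    intro s a b c h h1 h2
    rcases h with h | h | h
    · exact Or.inl (ihl _ _ _ _ h h1 h2)
    · exact Or.inr (Or.inl (by omega))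
    · exact Or.inr (Or.inr (ihr _ _ _ _ h h1 h2))

theorem LR_trans (t : UBT) : ∀ s a b c, LR t s a b → LR t s b c → LR t s a c := by
  induction t with
  | leaf => intro s a b c h; exact h.elim
  | node l r ihl ihr =>
    intro s a b c h h'
    have B1 := LR_bd l s a b
    have B2 := LR_bd l s b c
    have B3 := LR_bd r (s + sizeU l + 1) a b
    have B4 := LR_bd r (s + sizeU l + 1) b c
    have I1 := ihl s a b c
    have I2 := ihr (s + sizeU l + 1) a b c
    simp only [LR] at *
    rcases h with h | h | h <;> rcases h' with h' | h' | h'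
    · exact Or.inl (I1 h h')
    · have := B1 h; omega
    · have := B1 h; have := B4 h'; omega
    · have := B2 h'; omega
    · omega
    · have := B4 h'; omega
    · have := B3 h; have := B2 h'; omega
    · have := B3 h; omega
    · exact Or.inr (Or.inr (I2 h h'))

theorem RR_trans (t : UBT) : ∀ s a b c, RR t s a b → RR t s b c → RR t s a c := by
  induction t with
  | leaf => intro s a b c h; exact h.elim
  | node l r ihl ihr =>
    intro s a b c h hh
    have B1 := RR_bd l s a b
    have B2 := RR_bd l s b c
    have B3 := RR_bd r (s + sizeU l + 1) a b
    have B4 := RR_bd r (s + sizeU l + 1) b c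
    have I1 := ihl s a b c
    have I2 := ihr (s + sizeU l + 1) a b c
    simp only [RR] at *
    rcases h with h | h | h <;> rcases hh with hh | hh | hh
    · exact Or.inl (I1 h hh)
    · have := B1 h; omega
    · have := B1 h; have := B4 hh; omega
    · have := B2 hh; omega
    · omega
    · have := B4 hh; omega
    · have := B3 h; have := B2 hh; omega
    · have := B3 h; omega
    · exact Or.inr (Or.inr (I2 h hh))

/-- Of two consecutive nodes, exactly one is an ancestor of the other. -/
theorem LR_RR (t : UBT) : ∀ s i, s ≤ i → i + 1 < s + sizeU t →
    (¬ LR t s i (i+1) ↔ RR t s i (i+1)) := by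
  induction t with
  | leaf => intro s i h h'; simp only [sizeU] at h'; omega
  | node l r ihl ihr =>
    intro s i h h'
    have B1 := LR_bd l s i (i+1)
    have B2 := RR_bd l s i (i+1)
    have B3 := LR_bd r (s + sizeU l + 1) i (i+1)
    have B4 := RR_bd r (s + sizeU l + 1) i (i+1)
    have I1 := ihl s i
    have I2 := ihr (s + sizeU l + 1) i
    simp only [LR, RR, sizeU] at *
    by_cases c1 : i + 1 < s + sizeU l
    · have I1 := I1 h c1
      have n3 : ¬ LR r (s + sizeU l + 1) i (i+1) := fun h => by have := B3 h; omega
      have n4 : ¬ RR r (s + sizeU l + 1) i (i+1) := fun h => by have := B4 h; omega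
      have e1 : ¬ (i + 1 = s + sizeU l ∧ s ≤ i ∧ i < i + 1) := by omega
      have e2 : ¬ (i = s + sizeU l ∧ i < i + 1 ∧ i + 1 < s + sizeU l + 1 + sizeU r) := by omega
      rw [or_iff_left (not_or.2 ⟨e1, n3⟩), or_iff_left (not_or.2 ⟨e2, n4⟩)]
      exact I1
    · have n1 : ¬ LR l s i (i+1) := fun h => by have := B1 h; omega
      have n2 : ¬ RR l s i (i+1) := fun h => by have := B2 h; omega
      by_cases c2 : s + sizeU l + 1 ≤ i
      · have I2 := I2 c2 (by omega)
        have e1 : ¬ (i + 1 = s + sizeU l ∧ s ≤ i ∧ i < i + 1) := by omega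
        have e2 : ¬ (i = s + sizeU l ∧ i < i + 1 ∧ i + 1 < s + sizeU l + 1 + sizeU r) := by omega
        rw [or_iff_right n1, or_iff_right n2, or_iff_right e1, or_iff_right e2]
        exact I2
      · have n3 : ¬ LR r (s + sizeU l + 1) i (i+1) := fun h => by have := B3 h; omega
        have n4 : ¬ RR r (s + sizeU l + 1) i (i+1) := fun h => by have := B4 h; omega
        simp only [n1, n2, n3, n4, false_or, or_false]
        omega

theorem LR_inj (t : UBT) : ∀ t' s, sizeU t = sizeU t' → (∀ a b, LR t s a b ↔ LR t' s a b) →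
    t = t' := by
  induction t with
  | leaf =>
    intro t' s h _
    cases t' with
    | leaf => rfl
    | node l r => simp only [sizeU] at h; omega
  | node l r ihl ihr =>
    intro t' s h H
    cases t' with
    | leaf => simp only [sizeU] at h; omega
    | node l' r' =>
      simp only [sizeU] at h
      simp only [LR] at H
      have hs : sizeU l = sizeU l' := by
        rcases lt_trichotomy (sizeU l) (sizeU l') with c | c | c
        · have := (H s (s + sizeU l')).2 (Or.inr (Or.inl (by omega)))
          rcases this with g | g | g
          · have := LR_bd _ _ _ _ g; omega
          · omega
          · have := LR_bd _ _ _ _ g; omega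
        · exact c
        · have := (H s (s + sizeU l)).1 (Or.inr (Or.inl (by omega)))
          rcases this with g | g | g
          · have := LR_bd _ _ _ _ g; omega
          · omega
          · have := LR_bd _ _ _ _ g; omega
      rw [← hs] at H
      have e1 : l = l' := by
        refine ihl l' s hs fun a b => ⟨fun g => ?_, fun g => ?_⟩
        · have := LR_bd _ _ _ _ g
          rcases (H a b).1 (Or.inl g) with k | k | k
          · exact k
          · omega
          · have := LR_bd _ _ _ _ k; omega
        · have := LR_bd _ _ _ _ g
          rcases (H a b).2 (Or.inl g) with k | k | k
          · exact k
          · omega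
          · have := LR_bd _ _ _ _ k; omega
      have e2 : r = r' := by
        refine ihr r' (s + sizeU l + 1) (by omega) fun a b => ⟨fun g => ?_, fun g => ?_⟩
        · have := LR_bd _ _ _ _ g
          rcases (H a b).1 (Or.inr (Or.inr g)) with k | k | k
          · have := LR_bd _ _ _ _ k; omega
          · omega
          · exact k
        · have := LR_bd _ _ _ _ g
          rcases (H a b).2 (Or.inr (Or.inr g)) with k | k | k
          · have := LR_bd _ _ _ _ k; omega
          · omega
          · exact k
      rw [e1, e2]

theorem RR_inj (t : UBT) : ∀ t' s, sizeU t = sizeU t' → (∀ a b, RR t s a b ↔ RR t' s a b) →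
    t = t' := by
  induction t with
  | leaf =>
    intro t' s h _
    cases t' with
    | leaf => rfl
    | node l r => simp only [sizeU] at h; omega
  | node l r ihl ihr =>
    intro t' s h H
    cases t' with
    | leaf => simp only [sizeU] at h; omega
    | node l' r' =>
      simp only [sizeU] at h
      simp only [RR] at H
      have hs : sizeU l = sizeU l' := by
        rcases lt_trichotomy (sizeU l) (sizeU l') with c | c | c
        · have := (H (s + sizeU l) (s + sizeU l + sizeU r)).1 (Or.inr (Or.inl (by omega)))
          rcases this with g | g | g
          · have := RR_bd _ _ _ _ g; omega
          · omega
          · have := RR_bd _ _ _ _ g; omega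
        · exact c
        · have := (H (s + sizeU l') (s + sizeU l' + sizeU r')).2 (Or.inr (Or.inl (by omega)))
          rcases this with g | g | g
          · have := RR_bd _ _ _ _ g; omega
          · omega
          · have := RR_bd _ _ _ _ g; omega
      rw [← hs] at H
      have e1 : l = l' := by
        refine ihl l' s hs fun a b => ⟨fun g => ?_, fun g => ?_⟩
        · have := RR_bd _ _ _ _ g
          rcases (H a b).1 (Or.inl g) with k | k | k
          · exact k
          · omega
          · have := RR_bd _ _ _ _ k; omega
        · have := RR_bd _ _ _ _ g
          rcases (H a b).2 (Or.inl g) with k | k | k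
          · exact k
          · omega
          · have := RR_bd _ _ _ _ k; omega
      have e2 : r = r' := by
        refine ihr r' (s + sizeU l + 1) (by omega) fun a b => ⟨fun g => ?_, fun g => ?_⟩
        · have := RR_bd _ _ _ _ g
          rcases (H a b).1 (Or.inr (Or.inr g)) with k | k | k
          · have := RR_bd _ _ _ _ k; omega
          · omega
          · exact k
        · have := RR_bd _ _ _ _ g
          rcases (H a b).2 (Or.inr (Or.inr g)) with k | k | k
          · have := RR_bd _ _ _ _ k; omega
          · omega
          · exact k
      rw [e1, e2]

/-! ### Canopies -/

theorem loU_length (t : UBT) : ∀ b, (loU t b).length = sizeU t + 1 := by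
  induction t with
  | leaf => intro b; rfl
  | node l r ihl ihr => intro b; simp only [loU, List.length_append, ihl, ihr, sizeU]; omega

theorem loU_get (t : UBT) : ∀ b s i, i ≤ sizeU t → ((loU t b).getD i false = true ↔
    (sizeU t = 0 ∧ b = true) ∨ (0 < sizeU t ∧ i = sizeU t) ∨
      (0 < i ∧ LR t s (s + i - 1) (s + i))) := by
  induction t with
  | leaf =>
    intro b s i h
    simp only [sizeU, Nat.le_zero] at h
    subst h
    simp [loU, sizeU]
  | node l r ihl ihr =>
    intro b s i h
    simp only [loU, sizeU, LR] at *
    by_cases c : i ≤ sizeU l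
    · rw [List.getD_append _ _ _ _ (by rw [loU_length]; omega), ihl false s i c]
      have n3 : ¬ LR r (s + sizeU l + 1) (s+i-1) (s+i) := fun h => by
        have := LR_bd _ _ _ _ h; omega
      have e : (i = sizeU l ∧ 0 < i) ↔ (s + i = s + sizeU l ∧ s ≤ s + i - 1 ∧ s+i-1 < s+i) := by
        omega
      have e1 : ¬ (sizeU l + sizeU r + 1 = 0) := by omega
      have e2 : ¬ (i = sizeU l + sizeU r + 1) := by omega
      have e3 : (0 < sizeU l ∧ i = sizeU l) ↔ (0 < i ∧ (i = sizeU l ∧ 0 < i)) := by omega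
      simp only [n3, ← e, e1, e2, e3]
      simp
      tauto
    · rw [List.getD_append_right _ _ _ _ (by rw [loU_length]; omega), loU_length]
      obtain ⟨k, rfl⟩ : ∃ k, i = sizeU l + 1 + k := ⟨i - (sizeU l + 1), by omega⟩
      rw [show sizeU l + 1 + k - (sizeU l + 1) = k by omega,
        ihr true (s + sizeU l + 1) k (by omega)]
      have n1 : ¬ LR l s (s + (sizeU l + 1 + k) - 1) (s + (sizeU l + 1 + k)) := fun h => by
        have := LR_bd _ _ _ _ h; omega
      have n2 : k = 0 → ¬ LR r (s + sizeU l + 1) (s + (sizeU l + 1 + k) - 1)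
          (s + (sizeU l + 1 + k)) := fun _ h => by
        have := LR_bd _ _ _ _ h; omega
      rw [show s + sizeU l + 1 + k - 1 = s + (sizeU l + 1 + k) - 1 by omega,
        show s + sizeU l + 1 + k = s + (sizeU l + 1 + k) by omega]
      have e0 : ¬ (s + (sizeU l + 1 + k) = s + sizeU l ∧ s ≤ s + (sizeU l + 1 + k) - 1 ∧
          s + (sizeU l + 1 + k) - 1 < s + (sizeU l + 1 + k)) := by omega
      have e1 : ¬ (sizeU l + sizeU r + 1 = 0) := by omega
      have e2 : (0 < sizeU l + sizeU r + 1 ∧ sizeU l + 1 + k = sizeU l + sizeU r + 1) ↔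
          (k = sizeU r) := by omega
      have e3 : 0 < sizeU l + 1 + k := by omega
      simp only [n1, e0, e1, e2, e3]
      by_cases hk : k = 0
      · have := n2 hk
        subst hk
        simp only [this]
        simp
        omega
      · have : 0 < k := by omega
        have e4 : ¬ sizeU r = 0 := by omega
        have e5 : 0 < sizeU r := by omega
        simp [this, e4, e5]

theorem canU_length (t : UBT) : (canU t).length = sizeU t - 1 := by
  simp [canU, loU_length]

theorem canU_get (t : UBT) (s i : ℕ) (h : i + 1 < sizeU t) :
    ((canU t).getD i false = true ↔ LR t s (s + i) (s + i + 1)) := by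
  have h1 : (canU t).getD i false = (loU t false).getD (i+1) false := by
    have := canU_length t
    have := loU_length t false
    rw [List.getD_eq_getElem _ _ (by omega), List.getD_eq_getElem _ _ (by omega)]
    simp [canU]
  rw [h1, loU_get t false s (i+1) (by omega)]
  have e1 : ¬ (i + 1 = sizeU t) := by omega
  have e2 : s + (i+1) - 1 = s + i := by omega
  rw [e2, ← add_assoc]
  simp [e1]

theorem isTwin_iff (J : UBT × UBT) : IsTwin J ↔ sizeU J.1 = sizeU J.2 ∧
    ∀ i, LR J.1 1 i (i+1) ↔ RR J.2 1 i (i+1) := by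
  unfold IsTwin
  constructor
  · rintro ⟨h1, h2, h3⟩
    refine ⟨h1, fun i => ?_⟩
    by_cases hi : 1 ≤ i ∧ i + 1 < 1 + sizeU J.1
    · obtain ⟨k, rfl⟩ : ∃ k, i = 1 + k := ⟨i - 1, by omega⟩
      have h3 := h3 k (by rw [canU_length]; omega)
      rw [← LR_RR _ _ _ (by omega) (by omega), ← canU_get _ _ _ (by omega),
        ← canU_get _ _ _ (by omega)]
      revert h3
      generalize (canU J.1).getD k false = x
      generalize (canU J.2).getD k false = y
      cases x <;> cases y <;> simp
    · constructor
      · intro h; have := LR_bd _ _ _ _ h; omega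
      · intro h; have := RR_bd _ _ _ _ h; omega
  · rintro ⟨h1, h2⟩
    refine ⟨h1, by rw [canU_length, canU_length, h1], fun k hk => ?_⟩
    rw [canU_length] at hk
    have h2 := h2 (1 + k)
    rw [← LR_RR _ _ _ (by omega) (by omega), ← canU_get _ _ _ (by omega),
      ← canU_get _ _ _ (by omega)] at h2
    revert h2
    generalize (canU J.1).getD k false = x
    generalize (canU J.2).getD k false = y
    cases x <;> cases y <;> simp
/-! ### Insertion algorithms and inversions -/

theorem foldl_leafInsL (σ : List ℕ) : ∀ l a r, σ.foldl leafInsL (.node l a r) =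
    .node ((σ.filter (fun x => decide (x < a))).foldl leafInsL l) a
      ((σ.filter (fun x => decide (¬ x < a))).foldl leafInsL r) := by
  induction σ with
  | nil => intro l a r; rfl
  | cons x σ ih =>
    intro l a r
    by_cases h : x < a
    · simp [leafInsL, h, ih]
    · simp [leafInsL, h, ih, not_lt.1 h]

theorem insL_cons (a : ℕ) (σ : List ℕ) : insL (a :: σ) =
    .node (insL (σ.filter (fun x => decide (x < a)))) a
      (insL (σ.filter (fun x => decide (¬ x < a)))) := by
  simp only [insL, List.foldl_cons, leafInsL, foldl_leafInsL]

theorem splitLE_LE (t : BT) (a b : ℕ) (h : b ≤ a) : splitLE (splitLE t a) b = splitLE t b := by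
  induction t with
  | leaf => rfl
  | node l c r ihl ihr =>
    by_cases h1 : c ≤ a <;> by_cases h2 : c ≤ b <;> simp [splitLE, h1, h2, ihl, ihr]
    omega

theorem splitGT_GT (t : BT) (a b : ℕ) (h : b ≤ a) : splitGT (splitGT t b) a = splitGT t a := by
  induction t with
  | leaf => rfl
  | node l c r ihl ihr =>
    by_cases h1 : c ≤ a <;> by_cases h2 : c ≤ b <;> simp [splitGT, h1, h2, ihl, ihr]
    omega

theorem splitGT_LE (t : BT) (a b : ℕ) (h : b ≤ a) :
    splitGT (splitLE t a) b = splitLE (splitGT t b) a := by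
  induction t with
  | leaf => rfl
  | node l c r ihl ihr =>
    by_cases h1 : c ≤ a <;> by_cases h2 : c ≤ b <;> simp [splitGT, splitLE, h1, h2, ihl, ihr]
    omega

theorem insR_append (σ : List ℕ) (a : ℕ) : insR (σ ++ [a]) = rootIns (insR σ) a := by
  simp [insR]

theorem split_insR (σ : List ℕ) : ∀ a,
    splitLE (insR σ) a = insR (σ.filter (fun x => decide (x ≤ a))) ∧
    splitGT (insR σ) a = insR (σ.filter (fun x => decide (¬ x ≤ a))) := by
  induction σ using List.reverseRecOn with
  | nil => intro a; exact ⟨rfl, rfl⟩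
  | append_singleton σ b ih =>
    intro a
    rw [List.filter_append, List.filter_append, insR_append]
    by_cases h : b ≤ a
    · have e1 : List.filter (fun x => decide (x ≤ a)) [b] = [b] := by simp [h]
      have e2 : List.filter (fun x => decide (¬ x ≤ a)) [b] = [] := by simp [h]
      rw [e1, e2, insR_append, List.append_nil, ← (ih a).1, ← (ih a).2]
      simp only [rootIns, splitLE, splitGT, h, if_true]
      rw [splitLE_LE _ _ _ h, splitGT_GT _ _ _ h, splitGT_LE _ _ _ h]
      exact ⟨rfl, rfl⟩
    · have e1 : List.filter (fun x => decide (x ≤ a)) [b] = [] := by simp; omega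
      have e2 : List.filter (fun x => decide (¬ x ≤ a)) [b] = [b] := by simp; omega
      rw [e1, e2, insR_append, List.append_nil, ← (ih a).1, ← (ih a).2]
      simp only [rootIns, splitLE, splitGT, h, if_false]
      have h' : a ≤ b := by omega
      rw [splitLE_LE _ _ _ h', splitGT_GT _ _ _ h', splitGT_LE _ _ _ h']
      exact ⟨rfl, rfl⟩

theorem insR_snoc (a : ℕ) (σ : List ℕ) : insR (σ ++ [a]) =
    .node (insR (σ.filter (fun x => decide (x ≤ a)))) a
      (insR (σ.filter (fun x => decide (¬ x ≤ a)))) := by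
  rw [insR_append, rootIns, (split_insR σ a).1, (split_insR σ a).2]

theorem size_insL (σ : List ℕ) : sizeU (shape (insL σ)) = σ.length := by
  induction h : σ.length using Nat.strong_induction_on generalizing σ with
  | _ n ih =>
    cases σ with
    | nil => simp at h; subst h; rfl
    | cons a σ =>
      simp only [List.length_cons] at h
      have k := List.length_eq_length_filter_add (l := σ) (fun x => decide (x < a))
      have k2 : (σ.filter (fun x => decide (¬ x < a))).length =
          (σ.filter (fun x => !decide (x < a))).length := by
        congr 2; funext x; by_cases hx : x < a <;> simp [hx]
      rw [insL_cons, shape, sizeU, ih _ (by omega) _ rfl, ih _ (by omega) _ rfl]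
      omega

theorem size_insR (σ : List ℕ) : sizeU (shape (insR σ)) = σ.length := by
  induction h : σ.length using Nat.strong_induction_on generalizing σ with
  | _ n ih =>
    rcases List.eq_nil_or_concat σ with rfl | ⟨σ, a, rfl⟩
    · simp at h; subst h; rfl
    · simp only [List.concat_eq_append, List.length_append, List.length_singleton] at h ⊢
      have k := List.length_eq_length_filter_add (l := σ) (fun x => decide (x ≤ a))
      have k2 : (σ.filter (fun x => decide (¬ x ≤ a))).length =
          (σ.filter (fun x => !decide (x ≤ a))).length := by
        congr 2; funext x; by_cases hx : x ≤ a <;> simp [hx]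
      rw [insR_snoc, shape, sizeU, ih _ (by omega) _ rfl, ih _ (by omega) _ rfl]
      omega

/-- A list enumerating the interval `[s, s+n)` without repetition. -/
def IsInt (s n : ℕ) (σ : List ℕ) : Prop := σ.Nodup ∧ σ.length = n ∧
  ∀ x, x ∈ σ ↔ s ≤ x ∧ x < s + n

theorem isPerm_isInt {n : ℕ} {σ : List ℕ} (h : IsPerm n σ) : IsInt 1 n σ := by
  refine ⟨h.nodup_iff.2 List.nodup_range', by simpa using h.length_eq, fun x => ?_⟩
  rw [h.mem_iff, List.mem_range'_1]

theorem isInt_of {s n : ℕ} {σ : List ℕ} (h1 : σ.Nodup)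
    (h3 : ∀ x, x ∈ σ ↔ s ≤ x ∧ x < s + n) : IsInt s n σ := by
  refine ⟨h1, ?_, h3⟩
  have : σ.Perm (List.range' s n) := by
    rw [List.perm_ext_iff_of_nodup h1 List.nodup_range']
    intro x; rw [h3, List.mem_range'_1]
  simpa using this.length_eq

theorem sub_filter {σ : List ℕ} {p : ℕ → Bool} {x y : ℕ} (hx : p x = true) (hy : p y = true) :
    [x, y].Sublist (σ.filter p) ↔ [x, y].Sublist σ := by
  constructor
  · intro h; exact h.trans List.filter_sublist
  · intro h
    have := h.filter p
    simpa [hx, hy] using this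

theorem sub_cons_self {σ : List ℕ} {a y : ℕ} (h : y ∈ σ) : [a, y].Sublist (a :: σ) := by
  simpa using h

theorem sub_cons_ne {σ : List ℕ} {a x y : ℕ} (h : x ≠ a) :
    [x, y].Sublist (a :: σ) ↔ [x, y].Sublist σ := by
  constructor
  · intro k
    cases k with
    | cons _ k => exact k
    | cons_cons _ k => exact absurd rfl h
  · intro k; exact k.cons a

theorem pair_mem {σ : List ℕ} {x y : ℕ} (h : [x, y].Sublist σ) : x ∈ σ ∧ y ∈ σ :=
  ⟨h.subset (by simp), h.subset (by simp)⟩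

theorem sub_rev {σ : List ℕ} {x y : ℕ} : [x, y].Sublist σ.reverse ↔ [y, x].Sublist σ := by
  have : [x, y] = [y, x].reverse := by simp
  rw [this, List.reverse_sublist]

theorem sub_snoc_self {σ : List ℕ} {a y : ℕ} (h : y ∈ σ) : [y, a].Sublist (σ ++ [a]) := by
  rw [← sub_rev]; simp [h]

theorem sub_snoc_ne {σ : List ℕ} {a x y : ℕ} (h : y ≠ a) :
    [x, y].Sublist (σ ++ [a]) ↔ [x, y].Sublist σ := by
  rw [← sub_rev, ← sub_rev (σ := σ)]
  simp only [List.reverse_append, List.reverse_cons, List.reverse_nil, List.nil_append,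
    List.singleton_append]
  exact sub_cons_ne h

theorem sub_total {σ : List ℕ} : ∀ {x y : ℕ}, x ∈ σ → y ∈ σ → x ≠ y →
    [x, y].Sublist σ ∨ [y, x].Sublist σ := by
  induction σ with
  | nil => intro x y h; simp at h
  | cons a σ ih =>
    intro x y hx hy hne
    by_cases h1 : x = a
    · subst h1
      left; exact sub_cons_self (by simpa [hne.symm] using hy)
    · by_cases h2 : y = a
      · subst h2
        right; exact sub_cons_self (by simpa [hne] using hx)
      · rw [sub_cons_ne h1, sub_cons_ne h2]
        exact ih (by simpa [h1] using hx) (by simpa [h2] using hy) hne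

theorem sub_asymm {σ : List ℕ} (hn : σ.Nodup) {x y : ℕ} (h : [x, y].Sublist σ)
    (h' : [y, x].Sublist σ) : False := by
  induction σ with
  | nil => simp at h
  | cons a σ ih =>
    rw [List.nodup_cons] at hn
    have hxy : x ≠ y := by
      rintro rfl
      have := h.nodup (List.nodup_cons.2 hn)
      simp at this
    by_cases h1 : x = a
    · subst h1
      rw [sub_cons_ne hxy.symm] at h'
      exact hn.1 (pair_mem h').2
    · rw [sub_cons_ne h1] at h
      by_cases h2 : y = a
      · subst h2; exact hn.1 (pair_mem h).2
      · rw [sub_cons_ne h2] at h'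
        exact ih hn.2 h h'

theorem LR_insL (σ : List ℕ) : ∀ s n, IsInt s n σ → ∀ a b,
    (LR (shape (insL σ)) s a b ↔ s ≤ a ∧ a < b ∧ b < s + n ∧
      ∀ j, a ≤ j → j < b → [b, j].Sublist σ) := by
  induction hk : σ.length using Nat.strong_induction_on generalizing σ with
  | _ k ih =>
    intro s n hσ a b
    cases σ with
    | nil =>
      have : n = 0 := by have := hσ.2.1; simpa using this.symm
      subst this
      simp only [insL, List.foldl_nil, shape, LR, false_iff]
      omega
    | cons c σ =>
      obtain ⟨h1, h2, h3⟩ := hσ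
      rw [List.nodup_cons] at h1
      have hc := (h3 c).1 (by simp)
      have h4 : ∀ x, x ∈ σ ↔ (s ≤ x ∧ x < s + n) ∧ x ≠ c := by
        intro x
        rw [← h3, List.mem_cons]
        constructor
        · intro h; exact ⟨Or.inr h, fun e => h1.1 (e ▸ h)⟩
        · rintro ⟨h | h, h'⟩
          · exact absurd h h'
          · exact h
      have i1 : IsInt s (c - s) (σ.filter (fun x => decide (x < c))) := by
        refine isInt_of (h1.2.filter _) fun x => ?_
        rw [List.mem_filter, h4, decide_eq_true_iff]; omega
      have i2 : IsInt (c + 1) (s + n - (c + 1)) (σ.filter (fun x => decide (¬ x < c))) := by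
        refine isInt_of (h1.2.filter _) fun x => ?_
        rw [List.mem_filter, h4, decide_eq_true_iff]; omega
      simp only [List.length_cons] at hk h2
      have j1 := ih _ (by have := List.length_filter_le (fun x => decide (x < c)) σ; omega)
        _ rfl _ _ i1 a b
      have j2 := ih _ (by have := List.length_filter_le (fun x => decide (¬ x < c)) σ; omega)
        _ rfl _ _ i2 a b
      have hsz : s + sizeU (shape (insL (σ.filter (fun x => decide (x < c))))) = c := by
        rw [size_insL, i1.2.1]; omega
      rw [insL_cons]
      simp only [shape, LR]
      rw [hsz, j1, j2]
      constructor
      · rintro (⟨g1, g2, g3, g4⟩ | ⟨rfl, g2, g3⟩ | ⟨g1, g2, g3, g4⟩)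
        · refine ⟨g1, g2, by omega, fun j q1 q2 => ?_⟩
          exact ((g4 j q1 q2).trans List.filter_sublist).cons _
        · refine ⟨g2, g3, by omega, fun j q1 q2 => ?_⟩
          apply sub_cons_self
          rw [h4]; omega
        · refine ⟨by omega, g2, by omega, fun j q1 q2 => ?_⟩
          exact ((g4 j q1 q2).trans List.filter_sublist).cons _
      · rintro ⟨g1, g2, g3, g4⟩
        rcases lt_trichotomy b c with q | q | q
        · left
          refine ⟨g1, g2, by omega, fun j q1 q2 => ?_⟩
          have := g4 j q1 q2
          rw [sub_cons_ne (by omega)] at this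
          rwa [sub_filter (by simp; omega) (by simp; omega)]
        · right; left; exact ⟨q, g1, g2⟩
        · right; right
          have hac : c < a := by
            by_contra hcon
            have := g4 c (by omega) q
            rw [sub_cons_ne (by omega)] at this
            exact h1.1 (pair_mem this).2
          refine ⟨by omega, g2, by omega, fun j q1 q2 => ?_⟩
          have := g4 j q1 q2
          rw [sub_cons_ne (by omega)] at this
          rwa [sub_filter (by simp; omega) (by simp; omega)]

theorem RR_insR (σ : List ℕ) : ∀ s n, IsInt s n σ → ∀ a b,
    (RR (shape (insR σ)) s a b ↔ s ≤ a ∧ a < b ∧ b < s + n ∧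
      ∀ j, a < j → j ≤ b → [j, a].Sublist σ) := by
  induction hk : σ.length using Nat.strong_induction_on generalizing σ with
  | _ k ih =>
    intro s n hσ a b
    rcases List.eq_nil_or_concat σ with rfl | ⟨σ, c, rfl⟩
    · have : n = 0 := by have := hσ.2.1; simpa using this.symm
      subst this
      simp only [insR, List.foldl_nil, shape, RR, false_iff]
      omega
    · rw [List.concat_eq_append] at hσ hk ⊢
      obtain ⟨h1, h2, h3⟩ := hσ
      have h1 : c ∉ σ ∧ σ.Nodup := by
        rw [List.nodup_append_comm] at h1
        simpa using h1
      have hc := (h3 c).1 (by simp)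
      have h4 : ∀ x, x ∈ σ ↔ (s ≤ x ∧ x < s + n) ∧ x ≠ c := by
        intro x
        rw [← h3, List.mem_append, List.mem_singleton]
        constructor
        · intro h; exact ⟨Or.inl h, fun e => h1.1 (e ▸ h)⟩
        · rintro ⟨h | h, h'⟩
          · exact h
          · exact absurd h h'
      have i1 : IsInt s (c - s) (σ.filter (fun x => decide (x ≤ c))) := by
        refine isInt_of (h1.2.filter _) fun x => ?_
        rw [List.mem_filter, h4, decide_eq_true_iff]; omega
      have i2 : IsInt (c + 1) (s + n - (c + 1)) (σ.filter (fun x => decide (¬ x ≤ c))) := by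
        refine isInt_of (h1.2.filter _) fun x => ?_
        rw [List.mem_filter, h4, decide_eq_true_iff]; omega
      simp only [List.length_append, List.length_singleton] at hk h2
      have j1 := ih _ (by have := List.length_filter_le (fun x => decide (x ≤ c)) σ; omega)
        _ rfl _ _ i1 a b
      have j2 := ih _ (by have := List.length_filter_le (fun x => decide (¬ x ≤ c)) σ; omega)
        _ rfl _ _ i2 a b
      have hsz : s + sizeU (shape (insR (σ.filter (fun x => decide (x ≤ c))))) = c := by
        rw [size_insR, i1.2.1]; omega
      have hsz2 : sizeU (shape (insR (σ.filter (fun x => decide (¬ x ≤ c))))) =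
          s + n - (c + 1) := by
        rw [size_insR, i2.2.1]
      rw [insR_snoc]
      simp only [shape, RR]
      rw [hsz, hsz2, j1, j2]
      constructor
      · rintro (⟨g1, g2, g3, g4⟩ | ⟨rfl, g2, g3⟩ | ⟨g1, g2, g3, g4⟩)
        · refine ⟨g1, g2, by omega, fun j q1 q2 => ?_⟩
          exact ((g4 j q1 q2).trans List.filter_sublist).trans (List.sublist_append_left _ _)
        · refine ⟨by omega, g2, by omega, fun j q1 q2 => ?_⟩
          apply sub_snoc_self
          rw [h4]; omega
        · refine ⟨by omega, g2, by omega, fun j q1 q2 => ?_⟩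
          exact ((g4 j q1 q2).trans List.filter_sublist).trans (List.sublist_append_left _ _)
      · rintro ⟨g1, g2, g3, g4⟩
        rcases lt_trichotomy a c with q | q | q
        · left
          have hac : b < c := by
            by_contra hcon
            have := g4 c q (by omega)
            rw [sub_snoc_ne (by omega)] at this
            exact h1.1 (pair_mem this).1
          refine ⟨g1, g2, by omega, fun j q1 q2 => ?_⟩
          have := g4 j q1 q2
          rw [sub_snoc_ne (by omega)] at this
          rwa [sub_filter (by simp; omega) (by simp; omega)]
        · right; left; exact ⟨q, g2, by omega⟩
        · right; right
          refine ⟨by omega, g2, by omega, fun j q1 q2 => ?_⟩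
          have := g4 j q1 q2
          rw [sub_snoc_ne (by omega)] at this
          rwa [sub_filter (by simp; omega) (by simp; omega)]
/-! ### The permutohedron order through inversions -/

theorem step_inv {σ ν : List ℕ} (h : PermutoStep σ ν) {a b : ℕ} (hab : a < b)
    (hs : [b, a].Sublist σ) : [b, a].Sublist ν := by
  obtain ⟨p, s, c, d, hcd, rfl, rfl⟩ := h
  induction p with
  | nil =>
    simp only [List.nil_append] at *
    by_cases h1 : b = c
    · subst h1
      have h2 : a ∈ d :: s := by
        cases hs with
        | cons _ k => exact (pair_mem k).2
        | cons_cons _ k => simpa using k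
      have h2 : a ∈ s := by
        rcases List.mem_cons.1 h2 with e | e
        · omega
        · exact e
      exact (sub_cons_self h2).cons _
    · rw [sub_cons_ne h1] at hs
      by_cases h3 : b = d
      · subst h3
        have h2 : a ∈ s := by
          cases hs with
          | cons _ k => exact (pair_mem k).2
          | cons_cons _ k => simpa using k
        exact sub_cons_self (List.mem_cons_of_mem _ h2)
      · rw [sub_cons_ne h3] at hs
        exact (hs.cons _).cons _
  | cons x p ih =>
    simp only [List.cons_append] at *
    cases hs with
    | cons _ k => exact (ih k).cons _
    | cons_cons _ k =>
      apply sub_cons_self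
      have : a ∈ p ++ c :: d :: s := by simpa using k
      simp only [List.mem_append, List.mem_cons] at this ⊢
      tauto

theorem le_inv {σ ν : List ℕ} (h : PermutoLe σ ν) {a b : ℕ} (hab : a < b)
    (hs : [b, a].Sublist σ) : [b, a].Sublist ν := by
  induction h with
  | refl => exact hs
  | tail _ h ih => exact step_inv h hab ih

theorem permutoLe_cons {σ ν : List ℕ} (a : ℕ) (h : PermutoLe σ ν) :
    PermutoLe (a :: σ) (a :: ν) := by
  induction h with
  | refl => exact Relation.ReflTransGen.refl
  | tail _ h ih =>
    obtain ⟨p, s, c, d, h, rfl, rfl⟩ := h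
    exact ih.tail ⟨a :: p, s, c, d, h, rfl, rfl⟩

theorem permutoLe_front (p q : List ℕ) (b : ℕ) (h : ∀ x ∈ p, x < b) :
    PermutoLe (p ++ b :: q) (b :: (p ++ q)) := by
  induction p with
  | nil => exact Relation.ReflTransGen.refl
  | cons x p ih =>
    have h1 := permutoLe_cons x (ih fun y hy => h y (List.mem_cons_of_mem _ hy))
    exact h1.tail ⟨[], p ++ q, x, b, h x (by simp), rfl, rfl⟩

theorem permutoLe_of_inv (ν : List ℕ) : ∀ σ : List ℕ, σ.Perm ν → ν.Nodup →
    (∀ a b, a < b → [b, a].Sublist σ → [b, a].Sublist ν) → PermutoLe σ ν := by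
  induction ν with
  | nil =>
    intro σ h _ _
    rw [List.perm_nil.1 h]
    exact Relation.ReflTransGen.refl
  | cons b ν ih =>
    intro σ h hn hi
    have hb : b ∈ σ := h.mem_iff.2 (by simp)
    obtain ⟨p, q, rfl⟩ := List.append_of_mem hb
    have hn' := h.nodup_iff.2 hn
    have hp : (p ++ q).Perm ν := by
      have : (b :: (p ++ q)).Perm (b :: ν) := (List.perm_middle.symm).trans h
      exact this.cons_inv
    rw [List.nodup_cons] at hn
    refine (permutoLe_front p q b ?_).trans (permutoLe_cons b (ih _ hp hn.2 ?_))
    · intro x hx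
      by_contra hcon
      have hxν : x ∈ ν := hp.mem_iff.1 (by simp [hx])
      have hne : x ≠ b := fun e => hn.1 (e ▸ hxν)
      have h1 : [x, b].Sublist (p ++ b :: q) := by
        have : [x, b] = [x] ++ [b] := rfl
        rw [this]
        exact List.Sublist.append (List.singleton_sublist.2 hx) (by simp)
      have h2 := hi b x (by omega) h1
      rw [sub_cons_ne hne] at h2
      exact hn.1 (pair_mem h2).2
    · intro x y hxy hs
      have h1 : [y, x].Sublist (p ++ b :: q) :=
        hs.trans (List.Sublist.append_left (List.sublist_cons_self _ _) _)
      have h2 := hi x y hxy h1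
      have hne : y ≠ b := fun e => hn.1 (e ▸ hp.mem_iff.1 (pair_mem hs).1)
      rwa [sub_cons_ne hne] at h2

/-! ### Permutations with a prescribed inversion set -/

theorem exists_perm (n : ℕ) (I : ℕ → ℕ → Prop) (hlt : ∀ a b, I a b → a < b)
    (ht : ∀ a b c, I a b → I b c → I a c)
    (hc : ∀ a b c, a < b → b < c → I a c → I a b ∨ I b c) :
    ∃ σ, IsPerm n σ ∧ ∀ a b, 1 ≤ a → a < b → b < 1 + n → ([b, a].Sublist σ ↔ I a b) := by
  let r : ℕ → ℕ → Prop := fun x y => x = y ∨ (x < y ∧ ¬ I x y) ∨ (y < x ∧ I y x)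
  have : Std.Total r := ⟨fun x y => by
    rcases lt_trichotomy x y with h | h | h
    · by_cases k : I x y
      · exact Or.inr (Or.inr (Or.inr ⟨h, k⟩))
      · exact Or.inl (Or.inr (Or.inl ⟨h, k⟩))
    · exact Or.inl (Or.inl h)
    · by_cases k : I y x
      · exact Or.inl (Or.inr (Or.inr ⟨h, k⟩))
      · exact Or.inr (Or.inr (Or.inl ⟨h, k⟩))⟩
  have : IsTrans ℕ r := ⟨fun x y z h1 h2 => by
    rcases h1 with rfl | ⟨h1, k1⟩ | ⟨h1, k1⟩
    · exact h2
    · rcases h2 with rfl | ⟨h2, k2⟩ | ⟨h2, k2⟩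
      · exact Or.inr (Or.inl ⟨h1, k1⟩)
      · refine Or.inr (Or.inl ⟨by omega, fun k => ?_⟩)
        rcases hc x y z h1 h2 k with q | q
        · exact k1 q
        · exact k2 q
      · rcases lt_trichotomy x z with q | q | q
        · exact Or.inr (Or.inl ⟨q, fun k => k1 (ht _ _ _ k k2)⟩)
        · exact Or.inl q
        · exact Or.inr (Or.inr ⟨q, (hc z x y q h1 k2).resolve_right k1⟩)
    · rcases h2 with rfl | ⟨h2, k2⟩ | ⟨h2, k2⟩
      · exact Or.inr (Or.inr ⟨h1, k1⟩)
      · rcases lt_trichotomy x z with q | q | q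
        · exact Or.inr (Or.inl ⟨q, fun k => k2 (ht _ _ _ k1 k)⟩)
        · exact Or.inl q
        · exact Or.inr (Or.inr ⟨q, (hc y z x h2 q k1).resolve_left k2⟩)
      · exact Or.inr (Or.inr ⟨by omega, ht _ _ _ k2 k1⟩)⟩
  refine ⟨(List.range' 1 n).insertionSort r, List.perm_insertionSort _ _, ?_⟩
  intro a b ha hab hb
  have hP : ((List.range' 1 n).insertionSort r).Pairwise r := List.pairwise_insertionSort r _
  have hmem : ∀ x, 1 ≤ x → x < 1 + n → x ∈ (List.range' 1 n).insertionSort r := by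
    intro x h1 h2
    rw [(List.perm_insertionSort r _).mem_iff, List.mem_range'_1]
    exact ⟨h1, h2⟩
  have hr : ∀ x y, [x, y].Sublist ((List.range' 1 n).insertionSort r) → r x y := by
    intro x y h
    have := hP.sublist h
    simpa using this
  constructor
  · intro h
    rcases hr _ _ h with k | k | k
    · omega
    · omega
    · exact k.2
  · intro h
    rcases sub_total (hmem a ha (by omega)) (hmem b (by omega) hb) (by omega) with k | k
    · rcases hr _ _ k with k | k | k
      · omega
      · exact absurd h k.2
      · omega
    · exact k

/-- The pairs of relations that come from pairs of twin binary trees. -/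
structure Valid (n : ℕ) (L R : ℕ → ℕ → Prop) : Prop where
  Lb : ∀ a b, L a b → 1 ≤ a ∧ a < b ∧ b < 1 + n
  Li : ∀ a b c, L a b → a ≤ c → c < b → L c b
  Lt : ∀ a b c, L a b → L b c → L a c
  Rb : ∀ a b, R a b → 1 ≤ a ∧ a < b ∧ b < 1 + n
  Ri : ∀ a b c, R a b → a < c → c ≤ b → R a c
  Rt : ∀ a b c, R a b → R b c → R a c
  tw : ∀ i, L i (i+1) ↔ R i (i+1)

/-- The inversion set generated by a pair of relations. -/
def Igen (L R : ℕ → ℕ → Prop) : ℕ → ℕ → Prop := Relation.TransGen fun a b => L a b ∨ R a b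

theorem Igen_mono {L R L' R' : ℕ → ℕ → Prop} (h1 : ∀ a b, L a b → L' a b)
    (h2 : ∀ a b, R a b → R' a b) {a b : ℕ} (h : Igen L R a b) : Igen L' R' a b := by
  induction h with
  | single k => exact .single (k.imp (h1 _ _) (h2 _ _))
  | tail _ k ih => exact ih.tail (k.imp (h1 _ _) (h2 _ _))

theorem Valid.edge_lt {n L R} (h : Valid n L R) {a b : ℕ} (k : L a b ∨ R a b) : a < b := by
  rcases k with k | k
  · exact (h.Lb _ _ k).2.1
  · exact (h.Rb _ _ k).2.1

theorem Valid.lt {n L R} (h : Valid n L R) {a b : ℕ} (k : Igen L R a b) : a < b := by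
  induction k with
  | single k => exact h.edge_lt k
  | tail _ k ih => exact ih.trans (h.edge_lt k)

theorem Valid.cotrans {n L R} (h : Valid n L R) {a b c : ℕ} (k : Igen L R a c) (hab : a < b)
    (hbc : b < c) : Igen L R a b ∨ Igen L R b c := by
  have edge : ∀ x y, L x y ∨ R x y → x < b → b < y → (L x b ∨ R x b) ∨ (L b y ∨ R b y) := by
    rintro x y (k | k) h1 h2
    · exact Or.inr (Or.inl (h.Li _ _ _ k h1.le h2))
    · exact Or.inl (Or.inr (h.Ri _ _ _ k h1 h2.le))
  induction k with
  | single k =>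
    rcases edge _ _ k hab hbc with q | q
    · exact Or.inl (.single q)
    · exact Or.inr (.single q)
  | @tail y z k1 k2 ih =>
    rcases lt_trichotomy b y with q | q | q
    · exact (ih q).imp id (fun w => w.tail k2)
    · subst q; exact Or.inl k1
    · rcases edge _ _ k2 q hbc with w | w
      · exact Or.inl (k1.tail w)
      · exact Or.inr (.single w)

theorem Valid.head {n L R} (h : Valid n L R) {a b : ℕ} (k : Igen L R a b) :
    ∃ y, (L a y ∨ R a y) ∧ y ≤ b := by
  induction k with
  | single k => exact ⟨_, k, le_rfl⟩
  | tail _ k ih =>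
    obtain ⟨y, h1, h2⟩ := ih
    exact ⟨y, h1, h2.trans (h.edge_lt k).le⟩

theorem Valid.last {n L R} (h : Valid n L R) {a b : ℕ} (k : Igen L R a b) :
    ∃ y, (L y b ∨ R y b) ∧ a ≤ y := by
  cases k with
  | single k => exact ⟨_, k, le_rfl⟩
  | tail k1 k => exact ⟨_, k, (h.lt k1).le⟩

theorem Valid.L_of {n L R} (h : Valid n L R) {b : ℕ} (d : ℕ) : ∀ a, a + d + 1 = b →
    (∀ j, a ≤ j → j < b → Igen L R j b) → L a b := by
  induction d with
  | zero =>
    rintro a rfl H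
    obtain ⟨y, h1, h2⟩ := h.head (H a le_rfl (by omega))
    have := h.edge_lt h1
    obtain rfl : y = a + 1 := by omega
    rcases h1 with h1 | h1
    · exact h1
    · exact (h.tw a).2 h1
  | succ d ih =>
    intro a hab H
    have h1 : L (a+1) b := ih (a+1) (by omega) fun j h1 h2 => H j (by omega) h2
    obtain ⟨y, h2, h3⟩ := h.head (H a le_rfl (by omega))
    have h4 := h.edge_lt h2
    rcases h2 with h2 | h2
    · rcases h3.eq_or_lt with rfl | h3
      · exact h2
      · exact h.Lt _ _ _ h2 (h.Li _ _ _ h1 (by omega) h3)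
    · exact h.Lt _ _ _ ((h.tw a).2 (h.Ri _ _ _ h2 (by omega) (by omega))) h1

theorem Valid.R_of {n L R} (h : Valid n L R) {a : ℕ} (d : ℕ) : ∀ b, a + d + 1 = b →
    (∀ j, a < j → j ≤ b → Igen L R a j) → R a b := by
  induction d with
  | zero =>
    rintro b rfl H
    obtain ⟨y, h1, h2⟩ := h.last (H (a+1) (by omega) (by omega))
    have := h.edge_lt h1
    obtain rfl : y = a := by omega
    rcases h1 with h1 | h1
    · exact (h.tw y).1 h1
    · exact h1
  | succ d ih =>
    rintro b rfl H
    have h1 : R a (a + d + 1) := ih _ rfl fun j h1 h2 => H j h1 (by omega)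
    obtain ⟨y, h2, h3⟩ := h.last (H (a + (d + 1) + 1) (by omega) le_rfl)
    have h4 := h.edge_lt h2
    rcases h2 with h2 | h2
    · have h5 : L (a + d + 1) (a + d + 1 + 1) := h.Li _ _ _ h2 (by omega) (by omega)
      exact h.Rt _ _ _ h1 ((h.tw _).1 h5)
    · rcases h3.eq_or_lt with rfl | h3
      · exact h2
      · exact h.Rt _ _ _ (h.Ri _ _ _ h1 h3 (by omega)) h2

/-- Every valid pair of relations is realized by a permutation, with the least inversion set. -/
theorem Valid.realize {n L R} (h : Valid n L R) : ∃ σ, IsPerm n σ ∧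
    (∀ a b, 1 ≤ a → a < b → b < 1 + n → ([b, a].Sublist σ ↔ Igen L R a b)) ∧
    (∀ a b, LR (shape (insL σ)) 1 a b ↔ L a b) ∧
    (∀ a b, RR (shape (insR σ)) 1 a b ↔ R a b) := by
  obtain ⟨σ, hσ, H⟩ := exists_perm n (Igen L R) (fun a b k => h.lt k)
    (fun a b c => Relation.TransGen.trans) (fun a b c h1 h2 k => h.cotrans k h1 h2)
  refine ⟨σ, hσ, H, fun a b => ?_, fun a b => ?_⟩
  · rw [LR_insL σ 1 n (isPerm_isInt hσ)]
    constructor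
    · rintro ⟨h1, h2, h3, h4⟩
      refine h.L_of (b - a - 1) a (by omega) fun j q1 q2 => ?_
      exact (H j b (by omega) q2 h3).1 (h4 j q1 q2)
    · intro k
      obtain ⟨h1, h2, h3⟩ := h.Lb _ _ k
      refine ⟨h1, h2, h3, fun j q1 q2 => ?_⟩
      exact (H j b (by omega) q2 h3).2 (.single (Or.inl (h.Li _ _ _ k q1 q2)))
  · rw [RR_insR σ 1 n (isPerm_isInt hσ)]
    constructor
    · rintro ⟨h1, h2, h3, h4⟩
      refine h.R_of (b - a - 1) b (by omega) fun j q1 q2 => ?_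
      exact (H a j h1 q1 (by omega)).1 (h4 j q1 q2)
    · intro k
      obtain ⟨h1, h2, h3⟩ := h.Rb _ _ k
      refine ⟨h1, h2, h3, fun j q1 q2 => ?_⟩
      exact (H a j h1 q1 (by omega)).2 (.single (Or.inr (h.Ri _ _ _ k q1 q2)))

/-! ### The lattice -/

/-- Pairs of twin binary trees with `n` nodes. -/
abbrev TBT (n : ℕ) : Type := {J : UBT × UBT // IsTwin J ∧ sizeU J.1 = n}

theorem TBT.size2 {n : ℕ} (J : TBT n) : sizeU J.1.2 = n := by
  rw [← J.2.1.1]; exact J.2.2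

theorem TBT.valid {n : ℕ} (J : TBT n) : Valid n (LR J.1.1 1) (RR J.1.2 1) where
  Lb a b h := by have := LR_bd _ _ _ _ h; rwa [J.2.2] at this
  Li := LR_int _ _
  Lt := LR_trans _ _
  Rb a b h := by have := RR_bd _ _ _ _ h; rwa [J.size2] at this
  Ri := RR_int _ _
  Rt := RR_trans _ _
  tw := ((isTwin_iff J.1).1 J.2.1).2

theorem TBT.ext' {n : ℕ} {J K : TBT n} (h1 : ∀ a b, LR J.1.1 1 a b ↔ LR K.1.1 1 a b)
    (h2 : ∀ a b, RR J.1.2 1 a b ↔ RR K.1.2 1 a b) : J = K := by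
  apply Subtype.ext
  apply Prod.ext
  · exact LR_inj _ _ 1 (by rw [J.2.2, K.2.2]) h1
  · exact RR_inj _ _ 1 (by rw [J.size2, K.size2]) h2

theorem Valid.exists_tbt {n L R} (h : Valid n L R) : ∃ J : TBT n,
    (∀ a b, LR J.1.1 1 a b ↔ L a b) ∧ (∀ a b, RR J.1.2 1 a b ↔ R a b) := by
  obtain ⟨σ, hσ, -, h1, h2⟩ := h.realize
  have hl : σ.length = n := (isPerm_isInt hσ).2.1
  refine ⟨⟨(shape (insL σ), shape (insR σ)), ?_, ?_⟩, h1, h2⟩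
  · rw [isTwin_iff]
    refine ⟨by rw [size_insL, size_insR], fun i => ?_⟩
    rw [h1, h2]
    exact h.tw i
  · rw [size_insL, hl]

/-- The componentwise order. -/
def leX {n : ℕ} (J K : TBT n) : Prop :=
  (∀ a b, LR J.1.1 1 a b → LR K.1.1 1 a b) ∧ (∀ a b, RR J.1.2 1 a b → RR K.1.2 1 a b)

theorem leX_iff_leB {n : ℕ} (J K : TBT n) : leX J K ↔ leB J.1 K.1 := by
  constructor
  · rintro ⟨h1, h2⟩
    obtain ⟨σ, hσ, a1, a2, a3⟩ := J.valid.realize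
    obtain ⟨ν, hν, b1, b2, b3⟩ := K.valid.realize
    have lσ : σ.length = n := (isPerm_isInt hσ).2.1
    have lν : ν.length = n := (isPerm_isInt hν).2.1
    refine ⟨n, σ, ν, hσ, hν, ?_, ?_, ?_⟩
    · apply Prod.ext
      · exact LR_inj _ _ 1 (by rw [J.2.2, Pshape, size_insL, lσ]) a2
      · exact RR_inj _ _ 1 (by rw [J.size2, Pshape, size_insR, lσ]) a3
    · apply Prod.ext
      · exact LR_inj _ _ 1 (by rw [K.2.2, Pshape, size_insL, lν]) b2
      · exact RR_inj _ _ 1 (by rw [K.size2, Pshape, size_insR, lν]) b3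
    · refine permutoLe_of_inv ν σ (hσ.trans hν.symm) (isPerm_isInt hν).1 fun a b hab hs => ?_
      have ma := ((isPerm_isInt hσ).2.2 a).1 (pair_mem hs).2
      have mb := ((isPerm_isInt hσ).2.2 b).1 (pair_mem hs).1
      rw [b1 a b ma.1 hab mb.2]
      rw [a1 a b ma.1 hab mb.2] at hs
      exact Igen_mono h1 h2 hs
  · rintro ⟨m, σ, ν, hσ, hν, e1, e2, hle⟩
    have iσ := isPerm_isInt hσ
    have iν := isPerm_isInt hν
    unfold leX
    rw [← e1, ← e2]
    refine ⟨fun a b => ?_, fun a b => ?_⟩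
    · simp only [Pshape]
      rw [LR_insL _ _ _ iσ, LR_insL _ _ _ iν]
      rintro ⟨h1, h2, h3, h4⟩
      exact ⟨h1, h2, h3, fun j q1 q2 => le_inv hle q2 (h4 j q1 q2)⟩
    · simp only [Pshape]
      rw [RR_insR _ _ _ iσ, RR_insR _ _ _ iν]
      rintro ⟨h1, h2, h3, h4⟩
      exact ⟨h1, h2, h3, fun j q1 q2 => le_inv hle q1 (h4 j q1 q2)⟩

/-- The componentwise order is a partial order. -/
def poX (n : ℕ) : PartialOrder (TBT n) where
  le := leX
  le_refl J := ⟨fun _ _ h => h, fun _ _ h => h⟩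
  le_trans J K M h1 h2 := ⟨fun a b h => h2.1 a b (h1.1 a b h), fun a b h => h2.2 a b (h1.2 a b h)⟩
  le_antisymm J K h1 h2 := TBT.ext' (fun a b => ⟨h1.1 a b, h2.1 a b⟩)
    (fun a b => ⟨h1.2 a b, h2.2 a b⟩)

theorem inter_valid {n : ℕ} (S : Set (TBT n)) :
    Valid n (fun a b => (1 ≤ a ∧ a < b ∧ b < 1 + n) ∧ ∀ J ∈ S, LR J.1.1 1 a b)
      (fun a b => (1 ≤ a ∧ a < b ∧ b < 1 + n) ∧ ∀ J ∈ S, RR J.1.2 1 a b) where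
  Lb a b h := h.1
  Li a b c h h1 h2 := ⟨by omega, fun J hJ => J.valid.Li a b c (h.2 J hJ) h1 h2⟩
  Lt a b c h h' := ⟨by omega, fun J hJ => J.valid.Lt a b c (h.2 J hJ) (h'.2 J hJ)⟩
  Rb a b h := h.1
  Ri a b c h h1 h2 := ⟨by omega, fun J hJ => J.valid.Ri a b c (h.2 J hJ) h1 h2⟩
  Rt a b c h h' := ⟨by omega, fun J hJ => J.valid.Rt a b c (h.2 J hJ) (h'.2 J hJ)⟩
  tw i := and_congr_right fun _ => forall₂_congr fun J _ => J.valid.tw i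

theorem exists_glb {n : ℕ} (S : Set (TBT n)) : ∃ K : TBT n, (∀ J ∈ S, leX K J) ∧
    ∀ M : TBT n, (∀ J ∈ S, leX M J) → leX M K := by
  obtain ⟨K, h1, h2⟩ := (inter_valid S).exists_tbt
  refine ⟨K, fun J hJ => ⟨fun a b h => ((h1 a b).1 h).2 J hJ, fun a b h => ((h2 a b).1 h).2 J hJ⟩,
    fun M hM => ⟨fun a b h => ?_, fun a b h => ?_⟩⟩
  · exact (h1 a b).2 ⟨M.valid.Lb a b h, fun J hJ => (hM J hJ).1 a b h⟩
  · exact (h2 a b).2 ⟨M.valid.Rb a b h, fun J hJ => (hM J hJ).2 a b h⟩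

/-- The Baxter lattice. -/
noncomputable def latX (n : ℕ) : Lattice (TBT n) :=
  letI := poX n
  letI : InfSet (TBT n) := ⟨fun S => (exists_glb S).choose⟩
  (completeLatticeOfInf (TBT n) fun S =>
    ⟨fun J hJ => (exists_glb S).choose_spec.1 J hJ,
      fun M hM => (exists_glb S).choose_spec.2 M fun J hJ => hM hJ⟩).toLattice

/-- `≤_B` is a partial order on the pairs of twin binary trees
with `n` nodes, and this poset is a lattice. -/
theorem baxter_lattice (n : ℕ) :
    ∃ L : Lattice {J : UBT × UBT // IsTwin J ∧ sizeU J.1 = n},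
      ∀ J0 J1 : {J : UBT × UBT // IsTwin J ∧ sizeU J.1 = n},
        (letI := L; J0 ≤ J1) ↔ leB J0.1 J1.1 := by
  exact ⟨latX n, fun J0 J1 => leX_iff_leB J0 J1⟩
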